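/- arXiv:1508.05442 — 2 statements merged into one kernel-verified Lean document; each statement's English description precedes it below -/
import Mathlib

section
/- Let k ∈ ℕ and let P be a polynomial with real coefficients of degree at most k. Then for all bounded self-adjoint operators A, B on H, Im P(A + iB) = Σ_{m=1}^{⌊(k+1)/2⌋} ((−1)^{m−1} / (2m−1)!) · D^{2m−1}P(A;B), where D^{m}P(A;B) denotes the m-th derivative at t = 0 of the map t ↦ P(A + tB) from ℝ to B(H), and P is evaluated on operators via the canonical algebra homomorphism from real polynomials to B(H). -/
open ContinuousLinearMap MeasureTheory

variable {H : Type*} [NormedAddCommGroup H] [InnerProductSpace ℂ H] [CompleteSpace H]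

/-- The imaginary part `(Y - Y*)/(2i)` of a bounded operator. -/
noncomputable def opIm (Y : H →L[ℂ] H) : H →L[ℂ] H := (2 * Complex.I)⁻¹ • (Y - star Y)

/-- Evaluation of a real polynomial on a bounded operator, via the canonical algebra
homomorphism (coefficients are mapped into `ℂ`). -/
noncomputable def polyEval (P : Polynomial ℝ) (Y : H →L[ℂ] H) : H →L[ℂ] H :=
  Polynomial.aeval Y (P.map Complex.ofRealHom)

theorem aux_pow (A B : H →L[ℂ] H) (n : ℕ) : ∃ Q : Polynomial (H →L[ℂ] H), Q.natDegree ≤ n ∧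
    ∀ z : ℂ, (A + z • B) ^ n = Q.eval (algebraMap ℂ (H →L[ℂ] H) z) := by
  induction n with
  | zero => exact ⟨1, by simp, fun z => by simp⟩
  | succ n ih =>
    obtain ⟨Q, hQ, h⟩ := ih
    refine ⟨Polynomial.C A * Q + Polynomial.C B * (Q * Polynomial.X), ?_, fun z => ?_⟩
    · refine (Polynomial.natDegree_add_le _ _).trans (max_le ?_ ?_)
      · exact (Polynomial.natDegree_C_mul_le _ _).trans (by omega)
      · refine (Polynomial.natDegree_C_mul_le _ _).trans ?_
        refine Polynomial.natDegree_mul_le.trans ?_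
        have := Polynomial.natDegree_X_le (R := H →L[ℂ] H)
        omega
    · rw [pow_succ', h z, Polynomial.eval_add, Polynomial.eval_C_mul, Polynomial.eval_C_mul,
        Polynomial.eval_mul_X, add_mul, ← Algebra.commutes, ← mul_assoc, ← Algebra.commutes,
        Algebra.smul_def]

theorem aux_poly (A B : H →L[ℂ] H) (k : ℕ) (P : Polynomial ℝ) (hP : P.natDegree ≤ k) :
    ∃ c : ℕ → (H →L[ℂ] H), ∀ z : ℂ,
      polyEval P (A + z • B) = ∑ j ∈ Finset.range (k + 1), z ^ j • c j := by
  choose Q hQ h using aux_pow A B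
  refine ⟨fun j => ∑ n ∈ Finset.range (k + 1), (P.coeff n : ℂ) • (Q n).coeff j, fun z => ?_⟩
  have h1 : (P.map Complex.ofRealHom).natDegree < k + 1 :=
    lt_of_le_of_lt (Polynomial.natDegree_map_le) (by omega)
  rw [polyEval, Polynomial.aeval_eq_sum_range' h1]
  simp_rw [Finset.smul_sum]
  rw [Finset.sum_comm]
  refine Finset.sum_congr rfl fun n hn => ?_
  rw [Finset.mem_range] at hn
  rw [h n z, Polynomial.eval_eq_sum_range' (n := k + 1) (lt_of_le_of_lt (hQ n) hn),
    Finset.smul_sum]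
  refine Finset.sum_congr rfl fun j _ => ?_
  rw [← map_pow, ← Algebra.commutes, ← Algebra.smul_def, smul_comm, Polynomial.coeff_map]
  rfl

theorem aux_star (P : Polynomial ℝ) (Y : H →L[ℂ] H) :
    star (polyEval P Y) = polyEval P (star Y) := by
  simp only [polyEval, Polynomial.aeval_eq_sum_range, star_sum, star_smul, star_pow]
  refine Finset.sum_congr rfl fun j _ => ?_
  simp [Polynomial.coeff_map]

theorem aux_deriv (c : ℕ → (H →L[ℂ] H)) (N m : ℕ) (hm : m < N) :
    iteratedDeriv m (fun t : ℝ => ∑ j ∈ Finset.range N, t ^ j • c j) 0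
      = (m.factorial : ℝ) • c m := by
  rw [iteratedDeriv_fun_sum (fun j _ => by fun_prop)]
  have : ∀ j, iteratedDeriv m (fun t : ℝ => t ^ j • c j) 0
      = (iteratedDeriv m (fun t : ℝ => t ^ j) 0) • c j := by
    intro j
    have := ((ContinuousLinearMap.id ℝ ℝ).smulRight (c j)).iteratedFDeriv_comp_left
      (f := fun t : ℝ => t ^ j) (x := 0) (n := m) (i := m) (by fun_prop) le_rfl
    rw [iteratedDeriv, iteratedDeriv]
    exact congrArg (fun F => F fun _ => 1) this
  simp_rw [this, iteratedDeriv_pow]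
  rw [Finset.sum_eq_single m]
  · simp [Nat.descFactorial_self]
  · intro j _ hj
    rcases lt_or_gt_of_ne hj with h | h
    · simp [Nat.descFactorial_of_lt h]
    · simp [zero_pow (Nat.sub_ne_zero_of_lt h)]
  · intro h
    exact absurd (Finset.mem_range.2 hm) h

/-- For a real polynomial `P` of degree at most `k` and bounded self-adjoint `A, B`,
`Im P(A+iB) = Σ_{m=1}^{⌊(k+1)/2⌋} ((−1)^{m-1}/(2m-1)!) D^{2m-1}P(A;B)`, where `D^m P(A;B)` is
the `m`-th derivative at `t = 0` of `t ↦ P(A + tB)`. -/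
theorem stmt3 [TopologicalSpace.SeparableSpace H] (hinf : ¬ FiniteDimensional ℂ H)
    (k : ℕ) (P : Polynomial ℝ) (hP : P.natDegree ≤ k)
    (A B : H →L[ℂ] H) (hA : IsSelfAdjoint A) (hB : IsSelfAdjoint B) :
    opIm (polyEval P (A + Complex.I • B)) =
      ∑ m ∈ Finset.Icc 1 ((k + 1) / 2),
        ((-1 : ℝ) ^ (m - 1) / (Nat.factorial (2 * m - 1) : ℝ)) •
          iteratedDeriv (2 * m - 1) (fun t : ℝ => polyEval P (A + t • B)) 0 := by
  obtain ⟨c, hc⟩ := aux_poly A B k P hP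
  have hs : star (A + Complex.I • B) = A + (-Complex.I) • B := by
    simp [hA.star_eq, hB.star_eq, star_smul]
  have hf : (fun t : ℝ => polyEval P (A + t • B))
      = fun t : ℝ => ∑ j ∈ Finset.range (k + 1), t ^ j • c j := by
    funext t
    have := hc (t : ℂ)
    simp_rw [← Complex.ofReal_pow, Complex.coe_smul] at this
    exact this
  rw [opIm, aux_star, hs, hc, hc, hf, ← Finset.sum_sub_distrib, Finset.smul_sum]
  symm
  refine Finset.sum_of_injOn (fun m => 2 * m - 1) ?_ ?_ ?_ ?_
  · intro a ha b hb hab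
    simp only [Finset.coe_Icc, Set.mem_Icc] at ha hb hab
    omega
  · intro a ha
    simp only [Finset.coe_Icc, Set.mem_Icc, Finset.coe_range, Set.mem_Iio] at ha ⊢
    omega
  · intro j hj hn
    have he : Even j := by
      by_contra ho
      rw [Nat.not_even_iff_odd] at ho
      obtain ⟨r, rfl⟩ := ho
      refine hn ⟨r + 1, ?_, ?_⟩
      · simp only [Finset.coe_Icc, Set.mem_Icc, Finset.mem_range] at hj ⊢
        omega
      · simp only
        omega
    rw [he.neg_pow, sub_self, smul_zero]
  · intro m hm
    rw [Finset.mem_Icc] at hm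
    rw [aux_deriv c (k + 1) (2 * m - 1) (by omega), smul_smul,
      div_mul_cancel₀ _ (by exact_mod_cast Nat.factorial_ne_zero _)]
    obtain ⟨r, rfl⟩ : ∃ r, m = r + 1 := ⟨m - 1, by omega⟩
    have e : 2 * (r + 1) - 1 = 2 * r + 1 := by omega
    have ho : Odd (2 * r + 1) := ⟨r, rfl⟩
    simp only [e, Nat.add_sub_cancel]
    rw [ho.neg_pow, ← sub_smul, smul_smul, ← Complex.coe_smul]
    congr 1
    rw [pow_succ, pow_mul, Complex.I_sq]
    push_cast
    field_simp [Complex.I_ne_zero]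
    ring
end

section
/- Let k ∈ ℕ, λ ∈ [−1, 1], let A, B be bounded self-adjoint operators on H with the spectrum of A contained in (−1, 1) and B positive semidefinite, and set X := A + iB. Then I − λX is invertible, I − λ(A + tB) is invertible for real t near 0, and, writing D^{2m−1}g(A;B) for the (2m−1)-th derivative at t = 0 of the map t ↦ (A + tB)^{2k−1} (I − λ(A + tB))^{-1}, the following inequalities hold: if k is odd, Im{X^{2k−1}(I − λX)^{-1}} ≥ Σ_{m=1}^{k−1} ((−1)^{m−1} / (2m−1)!) · D^{2m−1}g(A;B) (the right-hand side being 0 when k = 1); if k is even, Im{X^{2k−1}(I − λX)^{-1}} ≤ Σ_{m=1}^{k−1} ((−1)^{m−1} / (2m−1)!) · D^{2m−1}g(A;B). -/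
open ContinuousLinearMap MeasureTheory

variable {H : Type*} [NormedAddCommGroup H] [InnerProductSpace ℂ H] [CompleteSpace H]

lemma opIm_add (Y Z : H →L[ℂ] H) : opIm (Y + Z) = opIm Y + opIm Z := by
  simp only [opIm, star_add, ← smul_add]; congr 1; abel

lemma aux_expand (l : ℝ) (A B : H →L[ℂ] H) (h0 : IsUnit (1 - (l : ℂ) • A)) (n : ℕ) :
    ∃ c : ℕ → (H →L[ℂ] H), ∀ w : ℂ, IsUnit (1 - (l : ℂ) • (A + w • B)) →
      (A + w • B) ^ n * Ring.inverse (1 - (l : ℂ) • (A + w • B)) =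
        ∑ i ∈ Finset.range n, w ^ i • c i +
          w ^ n • ((Ring.inverse (1 - (l : ℂ) • A) * B) ^ n *
            Ring.inverse (1 - (l : ℂ) • (A + w • B))) := by
  induction n with
  | zero => exact ⟨0, fun w _ => by simp⟩
  | succ n ih =>
    obtain ⟨c, hc⟩ := ih
    set R := Ring.inverse (1 - (l : ℂ) • A) with hR
    refine ⟨fun i => (if i < n then c i * A else (R * B) ^ n * (R * A)) +
      (if i = 0 then 0 else c (i - 1) * B), fun w hw => ?_⟩
    have h1 := hc w hw
    set Y := A + w • B with hY
    set V := Ring.inverse (1 - (l : ℂ) • Y) with hV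
    have hVr : (1 - (l : ℂ) • Y) * V = 1 := Ring.mul_inverse_cancel _ hw
    have hVl : V * (1 - (l : ℂ) • Y) = 1 := Ring.inverse_mul_cancel _ hw
    have hRl : R * (1 - (l : ℂ) • A) = 1 := Ring.inverse_mul_cancel _ h0
    have hcomm : V * Y = Y * V := by
      have h : (1 - (l : ℂ) • Y) * Y = Y * (1 - (l : ℂ) • Y) := by
        simp [mul_sub, sub_mul]
      calc V * Y = V * (Y * ((1 - (l : ℂ) • Y) * V)) := by rw [hVr, mul_one]
        _ = V * (Y * (1 - (l : ℂ) • Y)) * V := by simp only [mul_assoc]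
        _ = (V * (1 - (l : ℂ) • Y)) * Y * V := by rw [← h]; simp only [mul_assoc]
        _ = Y * V := by rw [hVl, one_mul]
    have key : Y * V = R * A + w • (R * B * V) := by
      have h : (1 - (l : ℂ) • A) * Y = A * (1 - (l : ℂ) • Y) + w • B := by
        simp only [hY, mul_sub, sub_mul, mul_add, mul_one, one_mul, smul_add, smul_mul_assoc,
          mul_smul_comm, smul_sub]
        module
      calc Y * V = R * ((1 - (l : ℂ) • A) * Y) * V := by rw [← mul_assoc, hRl, one_mul]
        _ = R * A * ((1 - (l : ℂ) • Y) * V) + w • (R * B * V) := by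
          rw [h]; simp only [mul_add, add_mul, mul_assoc, mul_smul_comm, smul_mul_assoc]
        _ = _ := by rw [hVr, mul_one]
    have step : Y ^ (n + 1) * V = (Y ^ n * V) * Y := by
      rw [pow_succ, mul_assoc, mul_assoc, hcomm]
    have sum1 : ∑ i ∈ Finset.range (n + 1), w ^ i • ((if i < n then c i * A else (R * B) ^ n * (R * A)) +
      (if i = 0 then 0 else c (i - 1) * B)) = (∑ i ∈ Finset.range n, w ^ i • c i) * Y
        + w ^ n • ((R * B) ^ n * (R * A)) := by
      simp only [smul_add, Finset.sum_add_distrib]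
      rw [Finset.sum_range_succ, Finset.sum_range_succ' (fun i => w ^ i • (if i = 0 then 0 else c (i - 1) * B))]
      simp only [hY, mul_add, Finset.sum_mul]
      rw [Finset.sum_congr rfl (g := fun i => w ^ i • c i * A)]
      · simp [pow_succ, mul_smul, add_right_comm, smul_comm w]
      · intro i hi
        simp [Finset.mem_range.1 hi]
    rw [step, h1, sum1, add_mul, smul_mul_assoc, mul_assoc ((R * B) ^ n), hcomm, key, mul_add ((R * B) ^ n),
      smul_add, mul_smul_comm, smul_smul, ← pow_succ, ← mul_assoc _ _ V, ← pow_succ, add_assoc]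

lemma aux_deriv_s7 {E : Type*} [NormedAddCommGroup E] [NormedSpace ℝ E] (n : ℕ) (c : ℕ → E)
    (h f : ℝ → E) (hh : ContDiffAt ℝ ⊤ h 0)
    (hf : f =ᶠ[nhds 0] fun t => ∑ i ∈ Finset.range n, t ^ i • c i + t ^ n • h t)
    (j : ℕ) (hj : j < n) : iteratedDeriv j f 0 = (j.factorial : ℝ) • c j := by
  rw [hf.iteratedDeriv_eq]
  have hh' : ContDiffAt ℝ j h 0 := hh.of_le le_top
  have hp : ∀ i, ContDiffAt ℝ j (fun t : ℝ => t ^ i) 0 := fun i => by fun_prop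
  have e := iteratedDeriv_add (n := j) (x := (0:ℝ)) (f := fun t => ∑ i ∈ Finset.range n, t ^ i • c i)
    (g := fun t => t ^ n • h t) (by fun_prop) ((hp n).smul hh')
  have e2 := iteratedDerivWithin_smul (n := j) (Set.mem_univ (0:ℝ)) uniqueDiffOn_univ
    (f := fun t : ℝ => t ^ n) (g := h) (hp n).contDiffWithinAt hh'.contDiffWithinAt
  simp only [iteratedDerivWithin_univ] at e2
  refine e.trans ?_
  have e3 : iteratedDeriv j (fun t => t ^ n • h t) 0 = 0 := by
    refine e2.trans (Finset.sum_eq_zero fun i hi => ?_)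
    have : n - i ≠ 0 := by have := Finset.mem_range.1 hi; omega
    simp [iteratedDeriv_pow, this]
  rw [e3, add_zero, iteratedDeriv_fun_sum (fun i _ => by fun_prop)]
  rw [Finset.sum_eq_single j]
  · rw [iteratedDeriv_smul_const (by fun_prop)]
    simp [iteratedDeriv_pow, Nat.descFactorial_self]
  · intro i _ hi
    rw [iteratedDeriv_smul_const (by fun_prop)]
    rcases lt_or_gt_of_ne hi with h | h
    · simp [iteratedDeriv_pow, Nat.descFactorial_of_lt h]
    · have : i - j ≠ 0 := by omega
      simp [iteratedDeriv_pow, this]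
  · intro h; exact absurd (Finset.mem_range.2 hj) h

lemma aux_star_s7 {E : Type*} [NormedRing E] [NormedAlgebra ℝ E] [StarRing E] [ContinuousStar E] [StarModule ℝ E] (f : ℝ → E)
    (hf : ∀ t, star (f t) = f t) (j : ℕ) : ∀ t, star (iteratedDeriv j f t) = iteratedDeriv j f t := by
  induction j with
  | zero => simpa using hf
  | succ j ih =>
    intro t
    rw [iteratedDeriv_succ, ← deriv.star]
    simp only [ih]

lemma aux_opIm (c : ℕ → (H →L[ℂ] H)) (k : ℕ) (hc : ∀ j < 2 * k + 1, star (c j) = c j) :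
    opIm (∑ i ∈ Finset.range (2 * k + 1), Complex.I ^ i • c i) =
      ∑ m ∈ Finset.Icc 1 k, ((-1 : ℝ) ^ (m - 1)) • c (2 * m - 1) := by
  induction k with
  | zero => simp [opIm, hc 0]
  | succ k ih =>
    rw [show 2 * (k + 1) + 1 = (2 * k + 1) + 1 + 1 by ring, Finset.sum_range_succ,
      Finset.sum_range_succ, opIm_add, opIm_add, ih (fun j hj => hc j (by omega)),
      Finset.sum_Icc_succ_top (by omega)]
    have e1 : opIm (Complex.I ^ (2 * k + 1) • c (2 * k + 1)) = ((-1 : ℝ) ^ k) • c (2 * k + 1) := by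
      rw [opIm, star_smul, hc _ (by omega), ← sub_smul, smul_smul, ← Complex.coe_smul]
      congr 1
      rw [pow_succ, pow_mul, Complex.I_sq]
      simp
      field_simp
      rw [Complex.I_sq]
      ring
    have e2 : opIm (Complex.I ^ (2 * k + 1 + 1) • c (2 * k + 1 + 1)) = 0 := by
      rw [opIm, star_smul, hc _ (by omega), ← sub_smul, smul_smul]
      have : Complex.I ^ (2 * k + 1 + 1) = (-1) ^ (k + 1) := by
        rw [show 2 * k + 1 + 1 = 2 * (k + 1) by ring, pow_mul, Complex.I_sq]
      rw [this]; simp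
    rw [e1, e2]
    simp [show 2 * (k + 1) - 1 = 2 * k + 1 by omega]

lemma aux_coercive [Nontrivial H] (l : ℝ) (hl : l ∈ Set.Icc (-1 : ℝ) 1)
    (A : H →L[ℂ] H) (hA : IsSelfAdjoint A)
    (hspA : spectrum ℂ A ⊆ (fun x : ℝ => (x : ℂ)) '' Set.Ioo (-1 : ℝ) 1) :
    ∃ r > (0 : ℝ), algebraMap ℝ (H →L[ℂ] H) r ≤ 1 - (l : ℂ) • A := by
  have hsa : IsSelfAdjoint (1 - (l : ℂ) • A) := by
    rw [isSelfAdjoint_iff]; simp [hA.star_eq]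
  rw [CFC.exists_pos_algebraMap_le_iff hsa]
  intro x hx
  have hx' : (x : ℂ) ∈ spectrum ℂ (1 - (l : ℂ) • A) := by
    have := spectrum.algebraMap_mem ℂ hx
    simpa using this
  have hp := spectrum.map_polynomial_aeval A (1 - Polynomial.C (l : ℂ) * Polynomial.X)
  simp only [map_sub, map_one, map_mul, Polynomial.aeval_C, Polynomial.aeval_X,
    Algebra.algebraMap_eq_smul_one, smul_mul_assoc, one_mul] at hp
  rw [hp] at hx'
  obtain ⟨y, hy, hyx⟩ := hx'
  obtain ⟨z, hz, rfl⟩ := hspA hy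
  have : x = 1 - l * z := by
    simp at hyx
    exact_mod_cast hyx.symm
  rw [this]
  nlinarith [hz.1, hz.2, hl.1, hl.2, abs_nonneg l, abs_nonneg z, abs_lt.2 hz, abs_le.2 hl, abs_mul l z, le_abs_self (l*z)]

lemma aux_unit (l : ℝ) (A B : H →L[ℂ] H) (hB : B.IsPositive) (r : ℝ) (hr : 0 < r)
    (h : algebraMap ℝ (H →L[ℂ] H) r ≤ 1 - (l : ℂ) • A) :
    IsUnit (1 - (l : ℂ) • (A + Complex.I • B)) := by
  refine isUnit_of_forall_le_norm_inner_map _ (c := ⟨r, hr.le⟩) hr fun x => ?_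
  have h1 := (ContinuousLinearMap.le_def _ _).1 h
  have h2 := h1.re_inner_nonneg_left x
  have h3 : (inner ℂ (B x) x).im = 0 := hB.isSymmetric.im_inner_apply_self x
  refine le_trans ?_ (Complex.abs_re_le_norm _)
  refine le_trans ?_ (le_abs_self _)
  have e1 : (1 - (l : ℂ) • (A + Complex.I • B)) x = (1 - (l : ℂ) • A) x - (l * Complex.I) • B x := by
    simp [mul_smul, sub_sub]
  have e2 : (inner ℂ ((l * Complex.I) • B x) x).re = 0 := by
    rw [inner_smul_left]; simp [h3]
  rw [e1, inner_sub_left, Complex.sub_re, e2, sub_zero]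
  rw [sub_apply, inner_sub_left, map_sub, sub_nonneg] at h2
  refine le_trans (le_of_eq ?_) h2
  rw [Algebra.algebraMap_eq_smul_one, ← Complex.coe_smul, smul_apply, one_apply_eq_self,
    inner_smul_left]
  simp [inner_self_eq_norm_sq_to_K, ← Complex.ofReal_pow]
  exact mul_comm _ _

/-- positivity of the remainder -/
lemma aux_pos (l : ℝ) (A B : H →L[ℂ] H) (hA : IsSelfAdjoint A) (hB : B.IsPositive)
    (h0 : IsUnit (1 - (l : ℂ) • A)) (h1 : IsUnit (1 - (l : ℂ) • (A + Complex.I • B))) (k : ℕ)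
    (Z : H →L[ℂ] H)
    (hZ : Z = (Ring.inverse (1 - (l : ℂ) • A) * B) ^ (2 * k + 1) *
            Ring.inverse (1 - (l : ℂ) • (A + Complex.I • B))) :
    ((2 : ℂ)⁻¹ • (Z + star Z)).IsPositive := by
  have hBs : star B = B := hB.isSelfAdjoint.star_eq
  set M := 1 - (l : ℂ) • A with hM
  have hMs : star M = M := by simp [hM, hA.star_eq]
  set R := Ring.inverse M with hR
  have hRs : star R = R := by rw [hR, ← Ring.inverse_star, hMs]
  set N := 1 - (l : ℂ) • (A + Complex.I • B) with hN
  have hNe : N = M - (l * Complex.I) • B := by simp [hN, hM, mul_smul, sub_sub]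
  set V := Ring.inverse N with hV
  have hRM : R * M = 1 := Ring.inverse_mul_cancel _ h0
  have hMR : M * R = 1 := Ring.mul_inverse_cancel _ h0
  have hNV : N * V = 1 := Ring.mul_inverse_cancel _ h1
  have hNVs : star V * star N = 1 := by rw [← star_mul, hNV, star_one]
  have hNs : star N = M + (l * Complex.I) • B := by
    rw [hNe, star_sub, hMs, star_smul, hBs]; simp
  -- G = (R B)^(2k+1) ; Q = G R
  set Q := (R * B) ^ (2 * k + 1) * R with hQ
  set S := (R * B) ^ k * R with hS
  have hpow : ∀ n, R * (B * R) ^ n = (R * B) ^ n * R := by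
    intro n
    induction n with
    | zero => simp
    | succ n ih => rw [pow_succ, ← mul_assoc, ih, pow_succ]; simp only [mul_assoc]
  have hSs : star S = S := by
    rw [hS, star_mul, star_pow, star_mul, hRs, hBs, hpow]
  have hQS : Q = S * B * S := by
    rw [hQ, hS, show 2 * k + 1 = k + 1 + k by ring, pow_add, pow_succ]; simp only [mul_assoc]
  have hQs : star Q = Q := by
    rw [hQS]; simp only [star_mul, hSs, hBs, mul_assoc]
  have hQBR : R * B * Q = Q * (B * R) := by
    rw [hQ, ← mul_assoc, ← pow_succ', pow_succ]; simp only [mul_assoc]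
  have hZ1 : Z = Q * (M * V) := by
    rw [hZ, hQ, mul_assoc, ← mul_assoc R M, hRM, one_mul]
  have hMV : star V * M = star (M * V) := by rw [star_mul, hMs]
  have hone : 1 = (1 - (l * Complex.I) • (B * R)) * (M * V) := by
    rw [sub_mul, one_mul, smul_mul_assoc, mul_assoc B, ← mul_assoc R, hRM, one_mul, ← hNV, hNe,
      sub_mul, smul_mul_assoc]
  set W := M * V with hW
  clear_value W
  have hone' : 1 = star W * (1 + (l * Complex.I) • (R * B)) := by
    have := congrArg star hone
    rw [star_one, star_mul, star_sub, star_one, star_smul, star_mul B R, hRs, hBs] at this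
    simpa using this
  have hfin : (2 : ℂ)⁻¹ • (Z + star Z) = star W * Q * W := by
    have a1 : Z = star W * ((1 + (l * Complex.I) • (R * B)) * Q) * W := by
      rw [← mul_assoc, ← hone', one_mul, hZ1]
    have a2 : star Z = star W * (Q * (1 - (l * Complex.I) • (B * R))) * W := by
      rw [mul_assoc, mul_assoc, ← hone, mul_one, hZ1, star_mul, hQs]
    rw [a2]
    nth_rw 1 [a1]
    rw [← add_mul, ← mul_add, add_mul, mul_sub, smul_mul_assoc, mul_smul_comm, hQBR, one_mul,
      mul_one, add_add_sub_cancel, ← two_smul ℂ Q, mul_smul_comm, smul_mul_assoc, smul_smul]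
    simp
  rw [hfin, hQS]
  have := hB.adjoint_conj (S * W)
  convert this using 1
  rw [← ContinuousLinearMap.star_eq_adjoint, star_mul, hSs]
  simp only [← ContinuousLinearMap.mul_def, mul_assoc]

lemma aux_opIm2 (Z : H →L[ℂ] H) (k : ℕ) :
    opIm (Complex.I ^ (2 * k + 1) • Z) = ((-1 : ℂ) ^ k) • ((2 : ℂ)⁻¹ • (Z + star Z)) := by
  have h : Complex.I ^ (2 * k + 1) = (-1) ^ k * Complex.I := by
    rw [pow_succ, pow_mul, Complex.I_sq]
  have h2 : star ((-1 : ℂ) ^ k * Complex.I) = - ((-1 : ℂ) ^ k * Complex.I) := by simp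
  rw [h, opIm, star_smul, h2, neg_smul, sub_neg_eq_add, ← smul_add, smul_smul, smul_smul]
  congr 1
  field_simp

/-- Lemma 3.4 of the paper: for `k ≥ 1`, `λ ∈ [−1,1]`, self-adjoint `A, B` with
`σ(A) ⊆ (−1,1)`, `B` positive semidefinite and `X = A + iB`, the operators `I − λX` and
`I − λ(A+tB)` (for `t` near `0`) are invertible and, with `D^{2m−1}g(A;B)` the `(2m−1)`-th
derivative at `t = 0` of `t ↦ (A+tB)^{2k−1} (I − λ(A+tB))⁻¹`, one has
`Im{X^{2k−1}(I−λX)⁻¹} ≥ Σ_{m=1}^{k−1} ((−1)^{m−1}/(2m−1)!) D^{2m−1}g(A;B)` if `k` is odd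
(the sum being `0` for `k = 1`) and the reverse inequality if `k` is even. -/
theorem stmt7 [TopologicalSpace.SeparableSpace H] (hinf : ¬ FiniteDimensional ℂ H)
    (k : ℕ) (hk : 1 ≤ k) (l : ℝ) (hl : l ∈ Set.Icc (-1 : ℝ) 1)
    (A B X : H →L[ℂ] H) (hA : IsSelfAdjoint A) (hB : IsSelfAdjoint B)
    (hBpos : B.IsPositive)
    (hspA : spectrum ℂ A ⊆ (fun x : ℝ => (x : ℂ)) '' Set.Ioo (-1 : ℝ) 1)
    (hX : X = A + Complex.I • B) :
    IsUnit (1 - (l : ℂ) • X) ∧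
    (∃ δ > (0 : ℝ), ∀ t : ℝ, |t| < δ → IsUnit (1 - (l : ℂ) • (A + t • B))) ∧
    (Odd k →
      (opIm (X ^ (2 * k - 1) * Ring.inverse (1 - (l : ℂ) • X))
        - ∑ m ∈ Finset.Icc 1 (k - 1),
            ((-1 : ℝ) ^ (m - 1) / (Nat.factorial (2 * m - 1) : ℝ)) •
              iteratedDeriv (2 * m - 1)
                (fun t : ℝ =>
                  (A + t • B) ^ (2 * k - 1) * Ring.inverse (1 - (l : ℂ) • (A + t • B)))
                0).IsPositive) ∧
    (Even k →
      ((∑ m ∈ Finset.Icc 1 (k - 1),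
          ((-1 : ℝ) ^ (m - 1) / (Nat.factorial (2 * m - 1) : ℝ)) •
            iteratedDeriv (2 * m - 1)
              (fun t : ℝ =>
                (A + t • B) ^ (2 * k - 1) * Ring.inverse (1 - (l : ℂ) • (A + t • B))) 0)
        - opIm (X ^ (2 * k - 1) * Ring.inverse (1 - (l : ℂ) • X))).IsPositive) := by
  have hnt : Nontrivial H := by
    by_contra hn
    rw [not_nontrivial_iff_subsingleton] at hn
    exact hinf inferInstance
  obtain ⟨r, hr, hrA⟩ := aux_coercive l hl A hA hspA
  have hu1 : IsUnit (1 - (l : ℂ) • (A + Complex.I • B)) := aux_unit l A B hBpos r hr hrA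
  have hu0 : IsUnit (1 - (l : ℂ) • A) := by
    simpa using aux_unit l A 0 isPositive_zero r hr hrA
  have hcont : Continuous (fun t : ℝ => 1 - (l : ℂ) • (A + t • B)) := by fun_prop
  have hev : ∀ᶠ t : ℝ in nhds 0, IsUnit (1 - (l : ℂ) • (A + t • B)) := by
    refine hcont.continuousAt.eventually (p := fun y => IsUnit y) ?_
    exact Units.isOpen.mem_nhds (by simpa using hu0)
  subst hX
  obtain ⟨k, rfl⟩ : ∃ k', k = k' + 1 := ⟨k - 1, by omega⟩
  rw [show 2 * (k + 1) - 1 = 2 * k + 1 by omega, show k + 1 - 1 = k by omega]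
  obtain ⟨c, hc⟩ := aux_expand l A B hu0 (2 * k + 1)
  set f : ℝ → (H →L[ℂ] H) := fun t : ℝ =>
    (A + t • B) ^ (2 * k + 1) * Ring.inverse (1 - (l : ℂ) • (A + t • B)) with hf
  have hder : ∀ j < 2 * k + 1, iteratedDeriv j f 0 = (j.factorial : ℝ) • c j := by
    intro j hj
    refine aux_deriv_s7 (2 * k + 1) c (fun t : ℝ => (Ring.inverse (1 - (l : ℂ) • A) * B) ^ (2 * k + 1) *
      Ring.inverse (1 - (l : ℂ) • (A + t • B))) f ?_ ?_ j hj
    · refine contDiffAt_const.mul ?_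
      obtain ⟨u, hu⟩ := hu0
      have h1 : ContDiffAt ℝ ⊤ Ring.inverse (1 - (l : ℂ) • (A + (0 : ℝ) • B)) := by
        rw [zero_smul, add_zero, ← hu]
        exact contDiffAt_ringInverse ℝ u
      exact h1.comp (0 : ℝ) (f := fun t : ℝ => 1 - (l : ℂ) • (A + t • B)) (by fun_prop)
    · filter_upwards [hev] with t ht
      have := hc (t : ℂ) (by rwa [Complex.coe_smul])
      simpa only [hf, Complex.coe_smul, ← Complex.ofReal_pow] using this
  have hstar : ∀ t, star (f t) = f t := by
    intro t
    have hY : star (A + t • B) = A + t • B := by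
      rw [star_add, star_smul, hA.star_eq, hB.star_eq]; simp
    have hM : star (1 - (l : ℂ) • (A + t • B)) = 1 - (l : ℂ) • (A + t • B) := by
      rw [star_sub, star_smul, hY]; simp
    simp only [hf]
    rw [star_mul, star_pow, hY, ← Ring.inverse_star, hM]
    by_cases hu : IsUnit (1 - (l : ℂ) • (A + t • B))
    · obtain ⟨u, hu⟩ := hu
      rw [← hu, Ring.inverse_unit]
      have hcm : Commute ((A + t • B) ^ (2 * k + 1)) (u : H →L[ℂ] H) := by
        rw [hu]
        exact Commute.pow_left ((Commute.one_right _).sub_right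
          ((Commute.refl _).smul_right _)) _
      exact hcm.units_inv_right.eq.symm
    · rw [Ring.inverse_non_unit _ hu, zero_mul, mul_zero]
  have hcs : ∀ j < 2 * k + 1, star (c j) = c j := by
    intro j hj
    have h1 := aux_star_s7 f hstar j 0
    rw [hder j hj, star_smul, star_trivial] at h1
    exact smul_right_injective _ (by positivity : (j.factorial : ℝ) ≠ 0) h1
  have hsum : ∑ m ∈ Finset.Icc 1 k, ((-1 : ℝ) ^ (m - 1) / (Nat.factorial (2 * m - 1) : ℝ)) •
      iteratedDeriv (2 * m - 1) f 0 = ∑ m ∈ Finset.Icc 1 k, ((-1 : ℝ) ^ (m - 1)) • c (2 * m - 1) := by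
    refine Finset.sum_congr rfl fun m hm => ?_
    have := Finset.mem_Icc.1 hm
    rw [hder _ (by omega), smul_smul, div_mul_cancel₀ _ (by positivity)]
  have hmain := congrArg opIm (hc Complex.I hu1)
  rw [opIm_add, aux_opIm c k hcs, aux_opIm2] at hmain
  have hpos := aux_pos l A B hA hBpos hu0 hu1 k _ rfl
  rw [hsum, hmain]
  refine ⟨hu1, ?_, fun hk => ?_, fun hk => ?_⟩
  · obtain ⟨δ, hδ, h⟩ := Metric.eventually_nhds_iff.1 hev
    exact ⟨δ, hδ, fun t ht => h (by simpa using ht)⟩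
  · have : Even k := by
      rcases Nat.even_or_odd k with h | h
      · exact h
      · exact absurd hk (Nat.not_odd_iff_even.2 h.add_one)
    rw [this.neg_one_pow, one_smul, add_sub_cancel_left]
    exact hpos
  · have : Odd k := by
      rcases Nat.even_or_odd k with h | h
      · exact absurd hk (Nat.not_even_iff_odd.2 h.add_one)
      · exact h
    rw [this.neg_one_pow, neg_one_smul, ← sub_eq_add_neg, sub_sub_cancel]
    exact hpos
end
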